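/- The Hosoya index of the path graph on d vertices equals the (d+1)-st Fibonacci number; more generally, the Hosoya index of the caterpillar C(a_1,...,a_d) equals the continuant K(a_1,...,a_d). -/

import Mathlib

def contK : List ℕ → ℕ
  | [] => 1
  | [a] => a
  | a :: b :: l => a * contK (b :: l) + contK l

noncomputable def hosoya {V : Type} (G : SimpleGraph V) : ℕ :=
  {M : Finset (Sym2 V) | ↑M ⊆ G.edgeSet ∧
    ∀ e ∈ M, ∀ f ∈ M, e ≠ f → ∀ v : V, v ∈ e → v ∉ f}.ncard

def caterpillar {d : ℕ} (a : Fin d → ℕ) : SimpleGraph ((i : Fin d) × Fin (a i)) :=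
  SimpleGraph.fromRel (fun v w =>
    (v.1 = w.1 ∧ v.2.val = 0 ∧ w.2.val ≠ 0) ∨
    ((w.1 : ℕ) = (v.1 : ℕ) + 1 ∧ v.2.val = 0 ∧ w.2.val = 0))

/-!
Sorting the matchings of `G` by the edge covering a vertex `v`, if any, gives
`Z(G) = Z(G - v) + ∑ Z(G - v - w)`, the sum running over the neighbours `w` of `v`. Take `v` to be
the first spine vertex of `C(a₁, …, a_d)`. Then `G - v` is `C(a₂, …, a_d)` up to isolated vertices;
each of the `a₁ - 1` leaves at `v` is isolated in `G - v` and contributes `Z(G - v)` once more,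
while the next spine vertex contributes `Z(C(a₃, …, a_d))`. This is the recursion of the continuant
expanded at its first entry. The path is the caterpillar `C(1, …, 1)`.
-/

section Matchings

variable {V W : Type*} {G : SimpleGraph V} {M : Finset (Sym2 V)} {v w : V}

/-- The matchings of `G`, as finite sets of pairwise disjoint edges. Disjointness is spelled out as
in `hosoya`, which is the cardinality of this set. -/
def matchings (G : SimpleGraph V) : Set (Finset (Sym2 V)) :=
  {M | ↑M ⊆ G.edgeSet ∧ ∀ e ∈ M, ∀ f ∈ M, e ≠ f → ∀ v : V, v ∈ e → v ∉ f}

lemma eq_of_mem_matchings (hM : M ∈ matchings G) {e f : Sym2 V} (he : e ∈ M) (hf : f ∈ M)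
    (hve : v ∈ e) (hvf : v ∈ f) : e = f :=
  not_not.1 fun hne => hM.2 e he f hf hne v hve hvf

lemma mem_matchings_of_subset {M' : Finset (Sym2 V)} (hM : M ∈ matchings G) (h : M' ⊆ M) :
    M' ∈ matchings G :=
  ⟨(Finset.coe_subset.2 h).trans hM.1, fun e he f hf => hM.2 e (h he) f (h hf)⟩

lemma finite_matchings (hG : G.edgeSet.Finite) : (matchings G).Finite :=
  (hG.finite_subsets.preimage Finset.coe_injective.injOn).subset fun _ hM => hM.1

lemma matchings_bot : matchings (⊥ : SimpleGraph V) = {∅} := by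
  ext M
  simp +contextual [matchings, Set.subset_empty_iff]

lemma map_mem_matchings_map (f : V ↪ W) :
    M.map f.sym2Map ∈ matchings (G.map f) ↔ M ∈ matchings G := by
  have disjoint_map_iff (e e' : Sym2 V) :
      (∀ w, w ∈ e.map f → w ∉ e'.map f) ↔ ∀ v, v ∈ e → v ∉ e' := by
    simp only [Sym2.mem_map]
    grind [f.injective.eq_iff]
  have map_eq_iff (e e' : Sym2 V) : e.map f = e'.map f ↔ e = e' := f.sym2Map.injective.eq_iff
  have subset_iff : ↑(M.map f.sym2Map) ⊆ (G.map f).edgeSet ↔ ↑M ⊆ G.edgeSet := by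
    rw [SimpleGraph.edgeSet_map, Finset.coe_map,
      Set.image_subset_image_iff f.sym2Map.injective]
  simp only [matchings, Set.mem_ofPred_eq, subset_iff, Finset.forall_mem_map, ne_eq,
    Function.Embedding.sym2Map_apply, map_eq_iff, disjoint_map_iff]

lemma matchings_map (f : V ↪ W) (G : SimpleGraph V) :
    matchings (G.map f) = Finset.map f.sym2Map '' matchings G := by
  classical
  ext M
  constructor
  · intro hM
    have hMG := hM.1
    rw [SimpleGraph.edgeSet_map, Finset.subset_set_image_iff] at hMG
    obtain ⟨M, -, rfl⟩ := hMG
    rw [← Finset.map_eq_image] at hM ⊢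
    exact ⟨M, (map_mem_matchings_map f).1 hM, rfl⟩
  · rintro ⟨M, hM, rfl⟩
    exact (map_mem_matchings_map f).2 hM

lemma mem_matchings_deleteIncidenceSet :
    M ∈ matchings (G.deleteIncidenceSet v) ↔ M ∈ matchings G ∧ ∀ e ∈ M, v ∉ e := by
  have subset_iff : ↑M ⊆ (G.deleteIncidenceSet v).edgeSet ↔ ↑M ⊆ G.edgeSet ∧ ∀ e ∈ M, v ∉ e := by
    rw [SimpleGraph.edgeSet_deleteIncidenceSet]
    simp only [Set.subset_def, Set.mem_sdiff, SimpleGraph.incidenceSet, Finset.mem_coe]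
    grind
  simp only [matchings, Set.mem_ofPred_eq, subset_iff]
  tauto

lemma matchings_eq_union (G : SimpleGraph V) (v : V) :
    matchings G = matchings (G.deleteIncidenceSet v) ∪
      ⋃ w ∈ G.neighborSet v, {M ∈ matchings G | s(v, w) ∈ M} := by
  ext M
  simp only [Set.mem_union, mem_matchings_deleteIncidenceSet, Set.mem_iUnion, Set.mem_ofPred_eq,
    exists_prop]
  constructor
  · intro hM
    refine or_iff_not_imp_left.2 fun hv => ?_
    push Not at hv
    obtain ⟨e, he, hve⟩ := hv hM
    obtain ⟨w, rfl⟩ := Sym2.mem_iff_exists.1 hve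
    exact ⟨w, hM.1 he, hM, he⟩
  · rintro (⟨hM, -⟩ | ⟨-, -, hM, -⟩) <;> exact hM

variable [DecidableEq V]

lemma insert_mem_matchings (hvw : G.Adj v w)
    (hM : M ∈ matchings ((G.deleteIncidenceSet v).deleteIncidenceSet w)) :
    insert s(v, w) M ∈ matchings G := by
  simp only [mem_matchings_deleteIncidenceSet] at hM
  obtain ⟨⟨hMG, hv⟩, hw⟩ := hM
  refine ⟨?_, ?_⟩
  · rw [Finset.coe_insert]
    exact Set.insert_subset hvw hMG.1
  · have disjoint_vw : ∀ e ∈ M, ∀ u ∈ e, u ∉ s(v, w) := by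
      rintro e he u hu huvw
      obtain rfl | rfl := Sym2.mem_iff.1 huvw
      exacts [hv e he hu, hw e he hu]
    have disjoint_M := hMG.2
    grind

lemma erase_mem_matchings (hM : M ∈ matchings G) (hvw : s(v, w) ∈ M) :
    M.erase s(v, w) ∈ matchings ((G.deleteIncidenceSet v).deleteIncidenceSet w) := by
  have notMem_of_mem_erase {u : V} (hu : u ∈ s(v, w)) : ∀ e ∈ M.erase s(v, w), u ∉ e :=
    fun e he hue => Finset.ne_of_mem_erase he <|
      eq_of_mem_matchings hM (Finset.mem_of_mem_erase he) hvw hue hu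
  simp only [mem_matchings_deleteIncidenceSet]
  exact ⟨⟨mem_matchings_of_subset hM (Finset.erase_subset _ _),
    notMem_of_mem_erase (Sym2.mem_mk_left v w)⟩, notMem_of_mem_erase (Sym2.mem_mk_right v w)⟩

lemma bijOn_insert_matchings (hvw : G.Adj v w) :
    Set.BijOn (insert s(v, w)) (matchings ((G.deleteIncidenceSet v).deleteIncidenceSet w))
      {M ∈ matchings G | s(v, w) ∈ M} := by
  have notMem : ∀ M ∈ matchings ((G.deleteIncidenceSet v).deleteIncidenceSet w), s(v, w) ∉ M :=
    fun M hM hvwM => (mem_matchings_deleteIncidenceSet.1 hM).2 _ hvwM (Sym2.mem_mk_right v w)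
  have invOn : Set.InvOn (fun M : Finset (Sym2 V) => M.erase s(v, w)) (insert s(v, w))
      (matchings ((G.deleteIncidenceSet v).deleteIncidenceSet w))
      {M ∈ matchings G | s(v, w) ∈ M} :=
    ⟨fun M hM => Finset.erase_insert (notMem M hM), fun M hM => Finset.insert_erase hM.2⟩
  exact invOn.bijOn
    (fun M hM => ⟨insert_mem_matchings hvw hM, Finset.mem_insert_self _ _⟩)
    (fun M hM => erase_mem_matchings hM.1 hM.2)

end Matchings

section VertexDeletion

variable {V W : Type*}

lemma deleteIncidenceSet_map_apply (f : V ↪ W) (G : SimpleGraph V) (x : V) :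
    (G.map f).deleteIncidenceSet (f x) = (G.deleteIncidenceSet x).map f := by
  ext u v
  simp only [SimpleGraph.deleteIncidenceSet_adj, SimpleGraph.map_adj]
  grind [f.injective.eq_iff]

lemma deleteIncidenceSet_map_of_notMem_range (f : V ↪ W) (G : SimpleGraph V) {w : W}
    (hw : w ∉ Set.range f) : (G.map f).deleteIncidenceSet w = G.map f := by
  ext u v
  simp only [SimpleGraph.deleteIncidenceSet_adj, SimpleGraph.map_adj]
  grind

end VertexDeletion

section HosoyaIndex

variable {V W : Type}

lemma hosoya_eq_ncard_matchings (G : SimpleGraph V) : hosoya G = (matchings G).ncard := rfl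

lemma hosoya_bot : hosoya (⊥ : SimpleGraph V) = 1 := by
  rw [hosoya_eq_ncard_matchings, matchings_bot, Set.ncard_singleton]

lemma hosoya_map (f : V ↪ W) (G : SimpleGraph V) : hosoya (G.map f) = hosoya G := by
  rw [hosoya_eq_ncard_matchings, matchings_map,
    Set.ncard_image_of_injective _ (Finset.map_injective _), hosoya_eq_ncard_matchings]

theorem hosoya_eq_add_sum_neighbors {G : SimpleGraph V} (hG : G.edgeSet.Finite) {v : V}
    {N : Finset V} (hN : G.neighborSet v = N) :
    hosoya G = hosoya (G.deleteIncidenceSet v) +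
      ∑ w ∈ N, hosoya ((G.deleteIncidenceSet v).deleteIncidenceSet w) := by
  classical
  have disjoint_uncovered : Disjoint (matchings (G.deleteIncidenceSet v))
      (⋃ w ∈ G.neighborSet v, {M ∈ matchings G | s(v, w) ∈ M}) := by
    refine Set.disjoint_iUnion₂_right.2 fun w _ => Set.disjoint_left.2 fun M hM hMw => ?_
    exact (mem_matchings_deleteIncidenceSet.1 hM).2 _ hMw.2 (Sym2.mem_mk_left v w)
  have pairwiseDisjoint : (G.neighborSet v).PairwiseDisjoint
      fun w => {M ∈ matchings G | s(v, w) ∈ M} := fun w _ w' _ hne =>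
    Set.disjoint_left.2 fun M hM hM' => hne <| Sym2.congr_right.1 <|
      eq_of_mem_matchings hM.1 hM.2 hM'.2 (Sym2.mem_mk_left v w) (Sym2.mem_mk_left v w')
  have finite_covered (w : V) : {M ∈ matchings G | s(v, w) ∈ M}.Finite :=
    (finite_matchings hG).subset (Set.sep_subset _ _)
  have finite_neighbors : (G.neighborSet v).Finite := hN ▸ N.finite_toSet
  rw [hosoya_eq_ncard_matchings, matchings_eq_union G v, Set.ncard_union_eq disjoint_uncovered
      ((finite_matchings hG).subset fun M hM => (mem_matchings_deleteIncidenceSet.1 hM).1)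
      (finite_neighbors.biUnion fun w _ => finite_covered w),
    finite_neighbors.ncard_biUnion (fun w _ => finite_covered w) pairwiseDisjoint,
    hN, finsum_mem_coe_finset]
  congr 1
  refine Finset.sum_congr rfl fun w hw => ?_
  have hvw : G.Adj v w := by rwa [← SimpleGraph.mem_neighborSet, hN]
  exact (bijOn_insert_matchings hvw).ncard_eq.symm

/-- `H` is `G - v` up to isolated vertices; the neighbours of `v` in `L` are leaves. -/
theorem hosoya_eq_of_deleteIncidenceSet_eq_map {G : SimpleGraph W} (hG : G.edgeSet.Finite)
    {H : SimpleGraph V} {f : V ↪ W} {v : W} (hv : G.deleteIncidenceSet v = H.map f)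
    {L : Finset W} {S : Finset V} (hN : G.neighborSet v = ↑L ∪ f '' S)
    (hL : ∀ w ∈ L, w ∉ Set.range f) :
    hosoya G = (L.card + 1) * hosoya H + ∑ x ∈ S, hosoya (H.deleteIncidenceSet x) := by
  have disjoint_L : Disjoint L (S.map f) := Finset.disjoint_left.2 fun w hw hwS =>
    hL w hw (Finset.coe_map_subset_range f S hwS)
  have hN' : G.neighborSet v = L.disjUnion (S.map f) disjoint_L := by simpa using hN
  have sum_L : ∑ w ∈ L, hosoya ((H.map f).deleteIncidenceSet w) = L.card * hosoya H :=
    Finset.sum_const_nat fun w hw => by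
      rw [deleteIncidenceSet_map_of_notMem_range f H (hL w hw), hosoya_map]
  rw [hosoya_eq_add_sum_neighbors hG hN', hv, hosoya_map, Finset.sum_disjUnion, sum_L,
    Finset.sum_map]
  simp only [deleteIncidenceSet_map_apply, hosoya_map]
  ring

end HosoyaIndex

section Caterpillar

variable {d : ℕ}

lemma caterpillar_adj (a : Fin d → ℕ) (x y : (i : Fin d) × Fin (a i)) :
    (caterpillar a).Adj x y ↔
      x.1 = y.1 ∧ (x.2.val = 0 ∧ y.2.val ≠ 0 ∨ y.2.val = 0 ∧ x.2.val ≠ 0) ∨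
      (y.1.val = x.1.val + 1 ∨ x.1.val = y.1.val + 1) ∧ x.2.val = 0 ∧ y.2.val = 0 := by
  simp only [caterpillar, SimpleGraph.fromRel_adj, Fin.ext_iff]
  constructor
  · omega
  · refine fun h => ⟨?_, by omega⟩
    rintro rfl
    omega

/-- The first spine vertex of a caterpillar. -/
def firstSpine (a : Fin (d + 1) → ℕ) (h : 0 < a 0) : (i : Fin (d + 1)) × Fin (a i) :=
  ⟨0, 0, h⟩

/-- The leaves of a caterpillar attached to its first spine vertex. -/
def firstLeaves (a : Fin (d + 1) → ℕ) (h : 0 < a 0) : Finset ((i : Fin (d + 1)) × Fin (a i)) :=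
  (Finset.univ.erase ⟨0, h⟩).map (Function.Embedding.sigmaMk 0)

/-- The inclusion of the caterpillar on the spine vertices other than the first one. -/
def tailEmbedding (a : Fin (d + 1) → ℕ) :
    ((i : Fin d) × Fin (Fin.tail a i)) ↪ ((i : Fin (d + 1)) × Fin (a i)) :=
  Function.Embedding.sigmaMap (Fin.succEmb d) fun _ => Function.Embedding.refl _

variable (a : Fin (d + 1) → ℕ)

lemma card_firstLeaves (h : 0 < a 0) : (firstLeaves a h).card = a 0 - 1 := by
  simp [firstLeaves]

lemma tailEmbedding_apply (x : (i : Fin d) × Fin (Fin.tail a i)) :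
    tailEmbedding a x = ⟨x.1.succ, x.2⟩ := rfl

lemma mem_range_tailEmbedding {x : (i : Fin (d + 1)) × Fin (a i)} :
    x ∈ Set.range (tailEmbedding a) ↔ x.1 ≠ 0 := by
  constructor
  · rintro ⟨y, rfl⟩
    exact Fin.succ_ne_zero y.1
  · obtain ⟨i, j⟩ := x
    intro hi
    obtain ⟨i, rfl⟩ := Fin.exists_succ_eq.2 hi
    exact ⟨⟨i, j⟩, rfl⟩

lemma eq_firstSpine_iff (h : 0 < a 0) {x : (i : Fin (d + 1)) × Fin (a i)} :
    x = firstSpine a h ↔ x.1 = 0 ∧ x.2.val = 0 := by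
  obtain ⟨i, j⟩ := x
  cases i using Fin.cases <;> simp [firstSpine, Fin.ext_iff]

lemma mem_firstLeaves (h : 0 < a 0) {x : (i : Fin (d + 1)) × Fin (a i)} :
    x ∈ firstLeaves a h ↔ x.1 = 0 ∧ x.2.val ≠ 0 := by
  obtain ⟨i, j⟩ := x
  cases i using Fin.cases <;> simp [firstLeaves, Fin.ext_iff, Sigma.ext_iff]

lemma caterpillar_adj_tailEmbedding (x y : (i : Fin d) × Fin (Fin.tail a i)) :
    (caterpillar a).Adj (tailEmbedding a x) (tailEmbedding a y) ↔
      (caterpillar (Fin.tail a)).Adj x y := by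
  simp [caterpillar_adj, tailEmbedding_apply]

lemma deleteIncidenceSet_firstSpine (h : 0 < a 0) :
    (caterpillar a).deleteIncidenceSet (firstSpine a h) =
      (caterpillar (Fin.tail a)).map (tailEmbedding a) := by
  ext x y
  simp only [SimpleGraph.deleteIncidenceSet_adj, SimpleGraph.map_adj]
  constructor
  · rintro ⟨hxy, hx, hy⟩
    have fst_ne_zero : x.1 ≠ 0 ∧ y.1 ≠ 0 := by
      rw [caterpillar_adj] at hxy
      simp only [ne_eq, eq_firstSpine_iff, Fin.ext_iff, Fin.val_zero] at hx hy hxy ⊢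
      omega
    obtain ⟨x, rfl⟩ := (mem_range_tailEmbedding a).2 fst_ne_zero.1
    obtain ⟨y, rfl⟩ := (mem_range_tailEmbedding a).2 fst_ne_zero.2
    exact ⟨x, y, (caterpillar_adj_tailEmbedding a x y).1 hxy, rfl, rfl⟩
  · rintro ⟨x, y, hxy, rfl, rfl⟩
    simpa [eq_firstSpine_iff, tailEmbedding_apply, ← caterpillar_adj_tailEmbedding] using hxy

lemma neighborSet_firstSpine (h : 0 < a 0) :
    (caterpillar a).neighborSet (firstSpine a h) = ↑(firstLeaves a h) ∪
      tailEmbedding a '' {x | x.1.val = 0 ∧ x.2.val = 0} := by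
  ext x
  by_cases hx : x.1 = 0
  · have notMem_image : x ∉ tailEmbedding a '' {x | x.1.val = 0 ∧ x.2.val = 0} := fun h =>
      (mem_range_tailEmbedding a).1 (Set.image_subset_range _ _ h) hx
    simp [caterpillar_adj, firstSpine, mem_firstLeaves, hx, notMem_image]
  · obtain ⟨x, rfl⟩ := (mem_range_tailEmbedding a).2 hx
    rw [Set.mem_union, (tailEmbedding a).injective.mem_set_image]
    simp [caterpillar_adj, firstSpine, mem_firstLeaves, tailEmbedding_apply, Fin.ext_iff]

/-- `S` collects the spine vertex next to the first one, if there is one. -/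
lemma hosoya_caterpillar_succ (h : 0 < a 0) {S : Finset ((i : Fin d) × Fin (Fin.tail a i))}
    (hS : ∀ x, x ∈ S ↔ x.1.val = 0 ∧ x.2.val = 0) :
    hosoya (caterpillar a) = a 0 * hosoya (caterpillar (Fin.tail a)) +
      ∑ x ∈ S, hosoya ((caterpillar (Fin.tail a)).deleteIncidenceSet x) := by
  have coe_S : (S : Set ((i : Fin d) × Fin (Fin.tail a i))) =
      {x | x.1.val = 0 ∧ x.2.val = 0} := Set.ext hS
  have neighborSet_eq : (caterpillar a).neighborSet (firstSpine a h) =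
      ↑(firstLeaves a h) ∪ tailEmbedding a '' S := by
    rw [neighborSet_firstSpine, coe_S]
  rw [hosoya_eq_of_deleteIncidenceSet_eq_map (Set.toFinite _) (deleteIncidenceSet_firstSpine a h)
    neighborSet_eq fun x hx => ?_, card_firstLeaves, Nat.sub_add_cancel h]
  rw [mem_range_tailEmbedding, not_not]
  exact ((mem_firstLeaves a h).1 hx).1

lemma hosoya_caterpillar_zero (a : Fin 0 → ℕ) : hosoya (caterpillar a) = 1 := by
  rw [Subsingleton.elim (caterpillar a) ⊥, hosoya_bot]

lemma hosoya_caterpillar_one (a : Fin 1 → ℕ) (h : 0 < a 0) : hosoya (caterpillar a) = a 0 := by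
  rw [hosoya_caterpillar_succ a h (S := ∅) fun x => x.1.elim0, hosoya_caterpillar_zero,
    Finset.sum_empty, mul_one, add_zero]

lemma hosoya_caterpillar_add_two (a : Fin (d + 2) → ℕ) (h₀ : 0 < a 0) (h₁ : 0 < a 1) :
    hosoya (caterpillar a) = a 0 * hosoya (caterpillar (Fin.tail a)) +
      hosoya (caterpillar (Fin.tail (Fin.tail a))) := by
  have tail_pos : 0 < Fin.tail a 0 := h₁
  rw [hosoya_caterpillar_succ a h₀ (S := {firstSpine (Fin.tail a) tail_pos}) fun x => by
      rw [Finset.mem_singleton, eq_firstSpine_iff, Fin.ext_iff, Fin.val_zero],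
    Finset.sum_singleton, deleteIncidenceSet_firstSpine, hosoya_map]

theorem hosoya_caterpillar : ∀ {d : ℕ} (a : Fin d → ℕ), (∀ i, 0 < a i) →
    hosoya (caterpillar a) = contK (List.ofFn a)
  | 0, a, _ => by rw [hosoya_caterpillar_zero, List.ofFn_zero, contK]
  | 1, a, ha => by rw [hosoya_caterpillar_one a (ha 0), List.ofFn_succ, List.ofFn_zero, contK]
  | d + 2, a, ha => by
    rw [hosoya_caterpillar_add_two a (ha 0) (ha 1),
      hosoya_caterpillar (Fin.tail a) fun i => ha i.succ,
      hosoya_caterpillar (Fin.tail (Fin.tail a)) fun i => ha i.succ.succ]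
    simp only [List.ofFn_succ, contK]
    rfl

end Caterpillar

section Path

lemma caterpillar_one_eq_map_pathGraph (d : ℕ) :
    caterpillar (fun _ : Fin d => 1) = (SimpleGraph.pathGraph d).map
      (Equiv.sigmaUnique (Fin d) fun _ => Fin 1).symm.toEmbedding := by
  ext x y
  rw [SimpleGraph.map_symm]
  simp [caterpillar_adj, SimpleGraph.pathGraph_adj, eq_comm]

lemma contK_replicate_one : ∀ d : ℕ, contK (List.replicate d 1) = Nat.fib (d + 1)
  | 0 => rfl
  | 1 => rfl
  | d + 2 => by
    have ih := contK_replicate_one (d + 1)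
    rw [List.replicate_succ] at ih
    rw [List.replicate_succ, List.replicate_succ, contK, ih, contK_replicate_one d, one_mul,
      Nat.fib_add_two (n := d + 1), add_comm]

theorem hosoya_pathGraph (d : ℕ) : hosoya (SimpleGraph.pathGraph d) = Nat.fib (d + 1) := by
  rw [← hosoya_map, ← caterpillar_one_eq_map_pathGraph,
    hosoya_caterpillar _ fun _ => Nat.one_pos, List.ofFn_const, contK_replicate_one]

end Path

theorem hosoya_path_and_caterpillar :
    (∀ d : ℕ, hosoya (SimpleGraph.pathGraph d) = Nat.fib (d + 1)) ∧
    (∀ (d : ℕ) (a : Fin d → ℕ), (∀ i, 0 < a i) →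
      hosoya (caterpillar a) = contK (List.ofFn a)) :=
  ⟨hosoya_pathGraph, fun _ => hosoya_caterpillar⟩
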